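/- For each T, let a_T and b_T be random vectors in ℝ^T and let 𝒱_T be a random M(T)-dimensional linear subspace of ℝ^T which is uniformly distributed among all M(T)-dimensional subspaces (i.e. 𝒱_T = Q_T W_T for a fixed M(T)-dimensional subspace W_T and a Haar-uniform orthogonal matrix Q_T) and independent of (a_T, b_T). Assume M(T)/T → α with 0 < α < 1, and that the angle between a_T and b_T tends to π/2 (i.e. the sample correlation ⟨a_T,b_T⟩/(‖a_T‖‖b_T‖) tends to 0 in probability) as T → ∞. Then the angle between the orthogonal projections of a_T and b_T onto 𝒱_T also tends to π/2 (their correlation tends to 0 in probability) as T → ∞. -/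

import Mathlib

open MeasureTheory ProbabilityTheory Filter Matrix

noncomputable section

instance matMS (m n : Type*) : MeasurableSpace (Matrix m n ℝ) :=
  (inferInstance : MeasurableSpace (m → n → ℝ))

/-- `ν` is the Haar (uniform) probability measure on the full orthogonal group. -/
def IsHaarOrth (n : Type*) [Fintype n] [DecidableEq n] (ν : Measure (Matrix n n ℝ)) : Prop :=
  IsProbabilityMeasure ν ∧ (∀ᵐ O ∂ν, Oᵀ * O = 1) ∧
    ∀ U : Matrix n n ℝ, Uᵀ * U = 1 → ν.map (fun O => U * O) = ν

/-- sample correlation (cosine of the angle) between two vectors of `ℝ^T`. -/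
def corr {T : ℕ} (u v : Fin T → ℝ) : ℝ :=
  (u ⬝ᵥ v) / (Real.sqrt (u ⬝ᵥ u) * Real.sqrt (v ⬝ᵥ v))

/-- orthogonal projection matrix onto the column span of a `T × M` matrix `X`. -/
def colSpanProj {T M : ℕ} (X : Matrix (Fin T) (Fin M) ℝ) : Matrix (Fin T) (Fin T) ℝ :=
  X * (Xᵀ * X)⁻¹ * Xᵀ

/-!
For a Haar orthogonal matrix `O` the law of `Oᵀ x` depends on `x` only through `‖x‖`. For the
projection `P = O G Oᵀ` onto a random `m`-dimensional subspace of `ℝ^T` this determines the first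
two moments of `⟨x, P x⟩` in terms of `tr G` and `tr G²`. By polarization and Markov's inequality,
for fixed unit vectors `⟨x, P y⟩` is `(m / T) ⟨x, y⟩` up to an error of order `√m / T` in
probability, which is negligible compared with `⟨x, P x⟩ ≈ ⟨y, P y⟩ ≈ m / T`. Hence `P x` and `P y`
are nearly orthogonal once `x` and `y` are and `m` is large; by independence one may condition on
`(a, b)` and apply this to the fixed vectors obtained.
-/

section Matrix

variable {n R : Type*} [Fintype n] [CommRing R]

lemma isSymm_conj {G : Matrix n n R} (hG : G.IsSymm) (O : Matrix n n R) :
    (O * G * Oᵀ).IsSymm := by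
  simp only [Matrix.IsSymm, transpose_mul, transpose_transpose, hG.eq, Matrix.mul_assoc]

lemma dotProduct_mulVec_comm_of_isSymm {N : Matrix n n R} (hN : N.IsSymm) (x y : n → R) :
    x ⬝ᵥ N *ᵥ y = y ⬝ᵥ N *ᵥ x := by
  rw [dotProduct_mulVec, ← mulVec_transpose, hN.eq, dotProduct_comm]

lemma mulVec_dotProduct_mulVec_of_isSymm_of_isIdempotentElem {N : Matrix n n R}
    (hsymm : N.IsSymm) (hidem : IsIdempotentElem N) (x y : n → R) :
    (N *ᵥ x) ⬝ᵥ (N *ᵥ y) = x ⬝ᵥ N *ᵥ y := by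
  rw [dotProduct_mulVec_comm_of_isSymm hsymm, mulVec_mulVec, hidem.eq,
    dotProduct_mulVec_comm_of_isSymm hsymm]

lemma trace_mul_self_nonneg_of_isSymm {G : Matrix n n ℝ} (hG : G.IsSymm) :
    0 ≤ (G * G).trace := by
  simpa only [conjTranspose_eq_transpose_of_trivial, hG.eq] using
    (posSemidef_conjTranspose_mul_self G).trace_nonneg

variable [DecidableEq n]

lemma isUnit_det_transpose_mul_self_of_rank_eq {m : Type*} [Fintype m]
    {W : Matrix m n ℝ} (hW : W.rank = Fintype.card n) : IsUnit (Wᵀ * W).det := by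
  rw [← isUnit_iff_isUnit_det, ← mulVec_surjective_iff_isUnit]
  refine LinearMap.range_eq_top.1 (Submodule.eq_top_of_finrank_eq ?_ :
    LinearMap.range (Wᵀ * W).mulVecLin = ⊤)
  rw [← Matrix.rank, rank_transpose_mul_self, hW, Module.finrank_fintype_fun_eq_card]

lemma conj_mul_conj {O : Matrix n n R} (hO : Oᵀ * O = 1) (G H : Matrix n n R) :
    (O * G * Oᵀ) * (O * H * Oᵀ) = O * (G * H) * Oᵀ := by
  calc (O * G * Oᵀ) * (O * H * Oᵀ) = O * G * (Oᵀ * O) * H * Oᵀ := by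
        simp only [Matrix.mul_assoc]
    _ = O * (G * H) * Oᵀ := by rw [hO, Matrix.mul_one, Matrix.mul_assoc O]

lemma trace_conj {O : Matrix n n R} (hO : Oᵀ * O = 1) (G : Matrix n n R) :
    (O * G * Oᵀ).trace = G.trace := by
  rw [trace_mul_comm, ← Matrix.mul_assoc, hO, Matrix.one_mul]

lemma sum_sq_quadForm_single_add_sub {N : Matrix n n R} (hN : N.IsSymm) :
    ∑ i, ∑ j,
      (((Pi.single i 1 + Pi.single j 1) ⬝ᵥ N *ᵥ (Pi.single i 1 + Pi.single j 1)) ^ 2 +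
        ((Pi.single i 1 - Pi.single j 1) ⬝ᵥ N *ᵥ (Pi.single i 1 - Pi.single j 1)) ^ 2) =
      4 * Fintype.card n * ∑ i, N i i ^ 2 + 4 * N.trace ^ 2 + 8 * (N * N).trace := by
  have expand (i j : n) :
      ((Pi.single i 1 + Pi.single j 1) ⬝ᵥ N *ᵥ (Pi.single i 1 + Pi.single j 1)) ^ 2 +
        ((Pi.single i 1 - Pi.single j 1) ⬝ᵥ N *ᵥ (Pi.single i 1 - Pi.single j 1)) ^ 2 =
      2 * N i i ^ 2 + 2 * N j j ^ 2 + 4 * (N i i * N j j) + 8 * (N i j * N j i) := by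
    simp only [mulVec_add, mulVec_sub, add_dotProduct, sub_dotProduct, dotProduct_add,
      dotProduct_sub, single_dotProduct, mulVec_single, one_mul, MulOpposite.op_one, one_smul,
      col_apply, hN.apply i j]
    ring
  simp only [expand, trace, diag_apply, mul_apply, Finset.sum_add_distrib, ← Finset.mul_sum,
    ← Finset.sum_mul, Finset.sum_const, Finset.card_univ, nsmul_eq_mul]
  ring

lemma sum_sq_dotProduct_single_add_sub :
    ∑ i : n, ∑ j : n,
      (((Pi.single i 1 + Pi.single j 1 : n → R) ⬝ᵥ (Pi.single i 1 + Pi.single j 1)) ^ 2 +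
        ((Pi.single i 1 - Pi.single j 1 : n → R) ⬝ᵥ (Pi.single i 1 - Pi.single j 1)) ^ 2) =
      8 * Fintype.card n * (Fintype.card n + 1) := by
  have := sum_sq_quadForm_single_add_sub (isSymm_one (n := n) (α := R))
  simp only [one_mulVec, Matrix.mul_one, trace_one, one_apply_eq, one_pow, Finset.sum_const,
    Finset.card_univ, nsmul_eq_mul] at this
  rw [this]
  ring

end Matrix

section OrthogonalInvariance

variable {n : Type*} [Fintype n] [DecidableEq n]

instance (m n : Type*) [Countable m] [Countable n] : BorelSpace (Matrix m n ℝ) :=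
  inferInstanceAs (BorelSpace (m → n → ℝ))

instance (m n : Type*) [Countable m] [Countable n] :
    SecondCountableTopology (Matrix m n ℝ) :=
  inferInstanceAs (SecondCountableTopology (m → n → ℝ))

lemma isCompact_orthogonalGroup : IsCompact {O : Matrix n n ℝ | Oᵀ * O = 1} := by
  have hcube : IsCompact (Set.univ.pi fun _ => Set.univ.pi fun _ => Set.Icc (-1) 1 :
      Set (Matrix n n ℝ)) :=
    isCompact_univ_pi fun _ => isCompact_univ_pi fun _ => isCompact_Icc
  refine hcube.of_isClosed_subset (isClosed_eq (by fun_prop) continuous_const)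
    fun O hO i _ j _ => ?_
  exact abs_le.1 (entry_norm_bound_of_unitary ((mem_orthogonalGroup_iff' n ℝ).2 hO) i j)

lemma exists_orthogonal_transpose_mulVec_eq {x y : n → ℝ} (h : x ⬝ᵥ x = y ⬝ᵥ y) :
    ∃ U : Matrix n n ℝ, Uᵀ * U = 1 ∧ Uᵀ *ᵥ x = y := by
  set v : EuclideanSpace ℝ n := WithLp.toLp 2 x
  set w : EuclideanSpace ℝ n := WithLp.toLp 2 y
  have hnorm : ‖v‖ = ‖w‖ := by
    simpa [v, w, EuclideanSpace.norm_eq, dotProduct, sq] using congrArg Real.sqrt h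
  set R := (ℝ ∙ (v - w))ᗮ.reflection
  set b := EuclideanSpace.basisFun n ℝ
  set A := R.toMatrix b.toBasis b.toBasis
  have hA : A * Aᵀ = 1 := (mem_orthogonalGroup_iff n ℝ).1 (R.toMatrix_mem_unitaryGroup b b)
  refine ⟨Aᵀ, by rwa [transpose_transpose], ?_⟩
  have hRv : A *ᵥ x = R v :=
    LinearMap.toMatrix_mulVec_repr b.toBasis b.toBasis R.toLinearEquiv.toLinearMap v
  rw [transpose_transpose, hRv, Submodule.reflection_sub hnorm]

namespace IsHaarOrth

variable {ν : Measure (Matrix n n ℝ)}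

lemma integrable_of_continuous (hν : IsHaarOrth n ν) {f : Matrix n n ℝ → ℝ}
    (hf : Continuous f) : Integrable f ν := by
  have := hν.1
  rw [← Measure.restrict_eq_self_of_ae_mem hν.2.1]
  exact hf.continuousOn.integrableOn_compact isCompact_orthogonalGroup

lemma map_transpose_mulVec_eq (hν : IsHaarOrth n ν) {x y : n → ℝ} (h : x ⬝ᵥ x = y ⬝ᵥ y) :
    ν.map (fun O => Oᵀ *ᵥ x) = ν.map (fun O => Oᵀ *ᵥ y) := by
  obtain ⟨U, hU, rfl⟩ := exists_orthogonal_transpose_mulVec_eq h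
  have hmul : Measurable fun O : Matrix n n ℝ => U * O := Continuous.measurable (by fun_prop)
  have hact : Measurable fun O : Matrix n n ℝ => Oᵀ *ᵥ x := Continuous.measurable (by fun_prop)
  calc ν.map (fun O => Oᵀ *ᵥ x) = (ν.map (fun O => U * O)).map (fun O => Oᵀ *ᵥ x) := by
        rw [hν.2.2 U hU]
    _ = ν.map (fun O => Oᵀ *ᵥ (Uᵀ *ᵥ x)) := by
        rw [Measure.map_map hact hmul]
        simp only [Function.comp_def, transpose_mul, mulVec_mulVec]

end IsHaarOrth

end OrthogonalInvariance

section RotatedForm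

variable {n : Type*} [Fintype n]

/-- The bilinear form of `O G Oᵀ`. If `G` is the orthogonal projection onto a subspace `V` and `O`
is orthogonal, this is `⟨x, P y⟩` with `P` the orthogonal projection onto the rotated subspace
`O V`. -/
def rotatedForm (G O : Matrix n n ℝ) (x y : n → ℝ) : ℝ :=
  x ⬝ᵥ (O * G * Oᵀ) *ᵥ y

@[fun_prop]
lemma continuous_rotatedForm (G : Matrix n n ℝ) (x y : n → ℝ) :
    Continuous fun O => rotatedForm G O x y := by
  unfold rotatedForm
  fun_prop

lemma rotatedForm_eq_dotProduct_transpose_mulVec (G O : Matrix n n ℝ) (x y : n → ℝ) :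
    rotatedForm G O x y = (Oᵀ *ᵥ x) ⬝ᵥ G *ᵥ (Oᵀ *ᵥ y) := by
  rw [rotatedForm, ← mulVec_mulVec, ← mulVec_mulVec, dotProduct_mulVec, ← mulVec_transpose]

lemma rotatedForm_smul_self (G O : Matrix n n ℝ) (s : ℝ) (x : n → ℝ) :
    rotatedForm G O (s • x) (s • x) = s ^ 2 * rotatedForm G O x x := by
  simp only [rotatedForm, mulVec_smul, dotProduct_smul, smul_dotProduct, smul_eq_mul]
  ring

lemma rotatedForm_eq_polarization {G : Matrix n n ℝ} (hG : G.IsSymm) (O : Matrix n n ℝ)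
    (x y : n → ℝ) :
    4 * rotatedForm G O x y =
      rotatedForm G O (x + y) (x + y) - rotatedForm G O (x - y) (x - y) := by
  have hcomm : y ⬝ᵥ (O * G * Oᵀ) *ᵥ x = x ⬝ᵥ (O * G * Oᵀ) *ᵥ y :=
    dotProduct_mulVec_comm_of_isSymm (isSymm_conj hG O) y x
  simp only [rotatedForm, mulVec_add, mulVec_sub, add_dotProduct, sub_dotProduct, dotProduct_add,
    dotProduct_sub, hcomm]
  ring

lemma sq_rotatedForm_sub_le {G : Matrix n n ℝ} (hG : G.IsSymm) (O : Matrix n n ℝ) (c : ℝ)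
    (x y : n → ℝ) :
    (rotatedForm G O x y - c * (x ⬝ᵥ y)) ^ 2 ≤
      ((rotatedForm G O (x + y) (x + y) - c * ((x + y) ⬝ᵥ (x + y))) ^ 2 +
        (rotatedForm G O (x - y) (x - y) - c * ((x - y) ⬝ᵥ (x - y))) ^ 2) / 8 := by
  set p := rotatedForm G O (x + y) (x + y) - c * ((x + y) ⬝ᵥ (x + y)) with hp
  set q := rotatedForm G O (x - y) (x - y) - c * ((x - y) ⬝ᵥ (x - y)) with hq
  have hdiff : rotatedForm G O x y - c * (x ⬝ᵥ y) = (p - q) / 4 := by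
    simp only [hp, hq, add_dotProduct, sub_dotProduct, dotProduct_add, dotProduct_sub,
      dotProduct_comm y x]
    linear_combination (1 / 4) * rotatedForm_eq_polarization hG O x y
  rw [hdiff]
  linarith [sq_nonneg (p + q)]

lemma sum_rotatedForm_single [DecidableEq n] {O : Matrix n n ℝ} (hO : Oᵀ * O = 1)
    (G : Matrix n n ℝ) : ∑ i, rotatedForm G O (Pi.single i 1) (Pi.single i 1) = G.trace := by
  rw [← trace_conj hO, trace]
  simp [rotatedForm]

end RotatedForm

namespace IsHaarOrth

variable {n : Type*} [Fintype n] [DecidableEq n] {ν : Measure (Matrix n n ℝ)}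

lemma integral_rotatedForm_self_pow (hν : IsHaarOrth n ν) (G : Matrix n n ℝ) (k : ℕ)
    {u : n → ℝ} (hu : u ⬝ᵥ u = 1) (x : n → ℝ) :
    ∫ O, rotatedForm G O x x ^ k ∂ν = (x ⬝ᵥ x) ^ k * ∫ O, rotatedForm G O u u ^ k ∂ν := by
  set f : (n → ℝ) → ℝ := fun v => (v ⬝ᵥ G *ᵥ v) ^ k
  have hf : Continuous f := by fun_prop
  have integral_eq (y : n → ℝ) :
      ∫ O, rotatedForm G O y y ^ k ∂ν = ∫ v, f v ∂ν.map (fun O => Oᵀ *ᵥ y) := by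
    rw [integral_map (Continuous.aemeasurable (by fun_prop)) hf.aestronglyMeasurable]
    simp only [f, rotatedForm_eq_dotProduct_transpose_mulVec]
  have hx : 0 ≤ x ⬝ᵥ x := by simpa using dotProduct_star_self_nonneg x
  have hnorm : x ⬝ᵥ x = (√(x ⬝ᵥ x) • u) ⬝ᵥ (√(x ⬝ᵥ x) • u) := by
    simp only [dotProduct_smul, smul_dotProduct, smul_eq_mul, hu, mul_one, Real.mul_self_sqrt hx]
  calc ∫ O, rotatedForm G O x x ^ k ∂ν
      = ∫ O, rotatedForm G O (√(x ⬝ᵥ x) • u) (√(x ⬝ᵥ x) • u) ^ k ∂ν := by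
        rw [integral_eq, integral_eq, hν.map_transpose_mulVec_eq hnorm]
    _ = (x ⬝ᵥ x) ^ k * ∫ O, rotatedForm G O u u ^ k ∂ν := by
        simp only [rotatedForm_smul_self, Real.sq_sqrt hx, mul_pow, integral_const_mul]

lemma sum_integral_rotatedForm_single_add_sub_sq (hν : IsHaarOrth n ν) {G : Matrix n n ℝ}
    (hG : G.IsSymm) :
    ∑ i, ∑ j,
      (∫ O, rotatedForm G O (Pi.single i 1 + Pi.single j 1)
          (Pi.single i 1 + Pi.single j 1) ^ 2 ∂ν +
        ∫ O, rotatedForm G O (Pi.single i 1 - Pi.single j 1)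
          (Pi.single i 1 - Pi.single j 1) ^ 2 ∂ν) =
      4 * Fintype.card n * ∑ i, ∫ O, rotatedForm G O (Pi.single i 1) (Pi.single i 1) ^ 2 ∂ν +
        4 * G.trace ^ 2 + 8 * (G * G).trace := by
  have := hν.1
  have hint (y : n → ℝ) : Integrable (fun O => rotatedForm G O y y ^ 2) ν :=
    hν.integrable_of_continuous (by fun_prop)
  have pointwise : ∀ᵐ O ∂ν,
      ∑ i, ∑ j,
        (rotatedForm G O (Pi.single i 1 + Pi.single j 1) (Pi.single i 1 + Pi.single j 1) ^ 2 +
          rotatedForm G O (Pi.single i 1 - Pi.single j 1) (Pi.single i 1 - Pi.single j 1) ^ 2) =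
        4 * Fintype.card n * ∑ i, rotatedForm G O (Pi.single i 1) (Pi.single i 1) ^ 2 +
          (4 * G.trace ^ 2 + 8 * (G * G).trace) := by
    filter_upwards [hν.2.1] with O hO
    have hsum := sum_sq_quadForm_single_add_sub (isSymm_conj hG O)
    rw [trace_conj hO, conj_mul_conj hO, trace_conj hO] at hsum
    simpa [rotatedForm, add_assoc] using hsum
  have hintegral := integral_congr_ae pointwise
  rw [integral_finsetSum _ fun i _ => integrable_finsetSum _ fun j _ => (hint _).fun_add (hint _),
    integral_add ((integrable_finsetSum _ fun i _ => hint _).const_mul _) (integrable_const _),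
    integral_const_mul, integral_finsetSum _ fun i _ => hint _] at hintegral
  rw [add_assoc]
  convert hintegral using 1
  · refine Finset.sum_congr rfl fun i _ => ?_
    rw [integral_finsetSum _ fun j _ => (hint _).fun_add (hint _)]
    exact Finset.sum_congr rfl fun j _ => (integral_add (hint _) (hint _)).symm
  · simp

variable [Nonempty n]

lemma integral_rotatedForm_self (hν : IsHaarOrth n ν) (G : Matrix n n ℝ) (x : n → ℝ) :
    ∫ O, rotatedForm G O x x ∂ν = G.trace / Fintype.card n * (x ⬝ᵥ x) := by
  have := hν.1
  obtain ⟨i₀⟩ := ‹Nonempty n›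
  set B := ∫ O, rotatedForm G O (Pi.single i₀ 1) (Pi.single i₀ 1) ∂ν
  have hscale (y : n → ℝ) : ∫ O, rotatedForm G O y y ∂ν = (y ⬝ᵥ y) * B := by
    simpa only [pow_one] using hν.integral_rotatedForm_self_pow G 1 (by simp) y
  have htrace : Fintype.card n * B = G.trace := by
    calc Fintype.card n * B
        = ∑ i : n, ∫ O, rotatedForm G O (Pi.single i 1) (Pi.single i 1) ∂ν := by
          simp [hscale]
      _ = ∫ O, ∑ i, rotatedForm G O (Pi.single i 1) (Pi.single i 1) ∂ν :=
          (integral_finsetSum _ fun i _ => hν.integrable_of_continuous (by fun_prop)).symm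
      _ = ∫ _, G.trace ∂ν :=
          integral_congr_ae (hν.2.1.mono fun O hO => sum_rotatedForm_single hO G)
      _ = G.trace := by simp
  rw [hscale, ← htrace]
  field_simp

lemma integral_rotatedForm_self_sq (hν : IsHaarOrth n ν) {G : Matrix n n ℝ} (hG : G.IsSymm)
    (x : n → ℝ) :
    ∫ O, rotatedForm G O x x ^ 2 ∂ν =
      (G.trace ^ 2 + 2 * (G * G).trace) / (Fintype.card n * (Fintype.card n + 2)) *
        (x ⬝ᵥ x) ^ 2 := by
  obtain ⟨i₀⟩ := ‹Nonempty n›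
  set d : ℝ := (Fintype.card n : ℝ)
  set A := ∫ O, rotatedForm G O (Pi.single i₀ 1) (Pi.single i₀ 1) ^ 2 ∂ν
  have hscale (y : n → ℝ) : ∫ O, rotatedForm G O y y ^ 2 ∂ν = (y ⬝ᵥ y) ^ 2 * A :=
    hν.integral_rotatedForm_self_pow G 2 (by simp) y
  -- Every integral in the summed identity is `A` times the fourth power of the norm of a known
  -- vector, so the identity becomes a linear equation for `A`.
  have moment_eq : 8 * d * (d + 1) * A =
      4 * d * (d * A) + 4 * G.trace ^ 2 + 8 * (G * G).trace := by
    have := hν.sum_integral_rotatedForm_single_add_sub_sq hG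
    simp only [hscale, ← add_mul, ← Finset.sum_mul, sum_sq_dotProduct_single_add_sub] at this
    simpa [d] using this
  have hA : A = (G.trace ^ 2 + 2 * (G * G).trace) / (d * (d + 2)) := by
    rw [eq_div_iff (by positivity)]
    linarith
  rw [hscale, hA, mul_comm]

lemma integral_sq_rotatedForm_self_sub_le (hν : IsHaarOrth n ν) {G : Matrix n n ℝ}
    (hG : G.IsSymm) (x : n → ℝ) :
    ∫ O, (rotatedForm G O x x - G.trace / Fintype.card n * (x ⬝ᵥ x)) ^ 2 ∂ν ≤
      2 * (G * G).trace / Fintype.card n ^ 2 * (x ⬝ᵥ x) ^ 2 := by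
  have := hν.1
  set d : ℝ := (Fintype.card n : ℝ)
  have hd : 0 < d := by positivity
  set μ := G.trace / d * (x ⬝ᵥ x)
  have htrace : 0 ≤ (G * G).trace := trace_mul_self_nonneg_of_isSymm hG
  have hint (k : ℕ) : Integrable (fun O => rotatedForm G O x x ^ k) ν :=
    hν.integrable_of_continuous (by fun_prop)
  have variance_eq : ∫ O, (rotatedForm G O x x - μ) ^ 2 ∂ν =
      ∫ O, rotatedForm G O x x ^ 2 ∂ν - μ ^ 2 := by
    have hmean : ∫ O, rotatedForm G O x x ∂ν = μ := hν.integral_rotatedForm_self G x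
    have hvar := variance_eq_sub (μ := ν) (X := fun O => rotatedForm G O x x)
      ((memLp_two_iff_integrable_sq (by fun_prop)).2 (hint 2))
    rw [variance_eq_integral (by fun_prop)] at hvar
    simpa only [hmean, Pi.pow_apply] using hvar
  have coeff_le : (G.trace ^ 2 + 2 * (G * G).trace) / (d * (d + 2)) ≤
      (G.trace ^ 2 + 2 * (G * G).trace) / d ^ 2 := by
    gcongr
    nlinarith
  calc ∫ O, (rotatedForm G O x x - μ) ^ 2 ∂ν
      = (G.trace ^ 2 + 2 * (G * G).trace) / (d * (d + 2)) * (x ⬝ᵥ x) ^ 2 - μ ^ 2 := by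
        rw [variance_eq, hν.integral_rotatedForm_self_sq hG]
    _ ≤ (G.trace ^ 2 + 2 * (G * G).trace) / d ^ 2 * (x ⬝ᵥ x) ^ 2 - μ ^ 2 := by gcongr
    _ = 2 * (G * G).trace / d ^ 2 * (x ⬝ᵥ x) ^ 2 := by ring

lemma integral_sq_rotatedForm_sub_le (hν : IsHaarOrth n ν) {G : Matrix n n ℝ} (hG : G.IsSymm)
    (x y : n → ℝ) :
    ∫ O, (rotatedForm G O x y - G.trace / Fintype.card n * (x ⬝ᵥ y)) ^ 2 ∂ν ≤
      (G * G).trace / Fintype.card n ^ 2 * (x ⬝ᵥ x + y ⬝ᵥ y) ^ 2 := by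
  set c := G.trace / (Fintype.card n : ℝ)
  set κ := (G * G).trace / (Fintype.card n : ℝ) ^ 2
  set D : (n → ℝ) → Matrix n n ℝ → ℝ := fun v O => rotatedForm G O v v - c * (v ⬝ᵥ v)
  have hκ : 0 ≤ κ := div_nonneg (trace_mul_self_nonneg_of_isSymm hG) (by positivity)
  have hint (v : n → ℝ) : Integrable (fun O => D v O ^ 2) ν :=
    hν.integrable_of_continuous (by fun_prop)
  have hvar (v : n → ℝ) : ∫ O, D v O ^ 2 ∂ν ≤ 2 * κ * (v ⬝ᵥ v) ^ 2 := by
    simpa only [κ, mul_div_assoc] using hν.integral_sq_rotatedForm_self_sub_le hG v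
  have hparallelogram :
      (x + y) ⬝ᵥ (x + y) + (x - y) ⬝ᵥ (x - y) = 2 * (x ⬝ᵥ x + y ⬝ᵥ y) := by
    simp only [add_dotProduct, sub_dotProduct, dotProduct_add, dotProduct_sub]
    ring
  have hnonneg (v : n → ℝ) : 0 ≤ v ⬝ᵥ v := by simpa using dotProduct_star_self_nonneg v
  calc ∫ O, (rotatedForm G O x y - c * (x ⬝ᵥ y)) ^ 2 ∂ν
      ≤ ∫ O, (D (x + y) O ^ 2 + D (x - y) O ^ 2) / 8 ∂ν :=
        integral_mono (hν.integrable_of_continuous (by fun_prop))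
          (((hint _).fun_add (hint _)).div_const 8)
          fun O => sq_rotatedForm_sub_le hG O c x y
    _ = (∫ O, D (x + y) O ^ 2 ∂ν + ∫ O, D (x - y) O ^ 2 ∂ν) / 8 := by
        rw [integral_div, integral_add (hint _) (hint _)]
    _ ≤ (2 * κ * ((x + y) ⬝ᵥ (x + y)) ^ 2 + 2 * κ * ((x - y) ⬝ᵥ (x - y)) ^ 2) / 8 := by
        gcongr <;> exact hvar _
    _ ≤ 2 * κ * ((x + y) ⬝ᵥ (x + y) + (x - y) ⬝ᵥ (x - y)) ^ 2 / 8 := by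
        rw [← mul_add]
        gcongr
        nlinarith [mul_nonneg (hnonneg (x + y)) (hnonneg (x - y))]
    _ = κ * (x ⬝ᵥ x + y ⬝ᵥ y) ^ 2 := by
        rw [hparallelogram]
        ring

lemma measureReal_abs_rotatedForm_sub_ge_le (hν : IsHaarOrth n ν) {G : Matrix n n ℝ}
    (hsymm : G.IsSymm) (hidem : IsIdempotentElem G) (htrace : 0 < G.trace) {x y : n → ℝ}
    (hx : x ⬝ᵥ x = 1) (hy : y ⬝ᵥ y = 1) {η : ℝ} (hη : 0 < η) :
    ν.real {O | η * (G.trace / Fintype.card n) ≤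
      |rotatedForm G O x y - G.trace / Fintype.card n * (x ⬝ᵥ y)|} ≤ 4 / (G.trace * η ^ 2) := by
  set c := G.trace / (Fintype.card n : ℝ) with hc
  have hc_pos : 0 < c := by positivity
  have hset : {O | η * c ≤ |rotatedForm G O x y - c * (x ⬝ᵥ y)|} =
      {O | (η * c) ^ 2 ≤ (rotatedForm G O x y - c * (x ⬝ᵥ y)) ^ 2} := by
    ext O
    simp only [Set.mem_ofPred_eq, sq_le_sq, abs_of_pos (mul_pos hη hc_pos)]
  have hmarkov := mul_meas_ge_le_integral_of_nonneg
    (μ := ν) (f := fun O => (rotatedForm G O x y - c * (x ⬝ᵥ y)) ^ 2)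
    (.of_forall fun O => sq_nonneg _) (hν.integrable_of_continuous (by fun_prop)) ((η * c) ^ 2)
  have hsecond := hν.integral_sq_rotatedForm_sub_le hsymm x y
  rw [hidem.eq, hx, hy] at hsecond
  rw [hset]
  calc ν.real {O | (η * c) ^ 2 ≤ (rotatedForm G O x y - c * (x ⬝ᵥ y)) ^ 2}
      ≤ G.trace / Fintype.card n ^ 2 * (1 + 1) ^ 2 / (η * c) ^ 2 := by
        rw [le_div_iff₀' (by positivity)]
        exact hmarkov.trans hsecond
    _ = 4 / (G.trace * η ^ 2) := by
        rw [hc]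
        field_simp
        norm_num

end IsHaarOrth

section Corr

variable {T : ℕ}

lemma corr_zero_left (v : Fin T → ℝ) : corr 0 v = 0 := by simp [corr]

lemma corr_zero_right (u : Fin T → ℝ) : corr u 0 = 0 := by simp [corr]

lemma corr_of_unit {u v : Fin T → ℝ} (hu : u ⬝ᵥ u = 1) (hv : v ⬝ᵥ v = 1) :
    corr u v = u ⬝ᵥ v := by
  simp [corr, hu, hv]

lemma corr_smul_smul {s t : ℝ} (hs : 0 < s) (ht : 0 < t) (u v : Fin T → ℝ) :
    corr (s • u) (t • v) = corr u v := by
  have norm_smul_eq {r : ℝ} (hr : 0 < r) (w : Fin T → ℝ) :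
      √((r • w) ⬝ᵥ (r • w)) = r * √(w ⬝ᵥ w) := by
    rw [dotProduct_smul, smul_dotProduct, smul_smul, smul_eq_mul,
      Real.sqrt_mul (mul_self_nonneg r), Real.sqrt_mul_self hr.le]
  rw [corr, norm_smul_eq hs, norm_smul_eq ht, smul_dotProduct, dotProduct_smul, smul_smul,
    smul_eq_mul, mul_mul_mul_comm, mul_div_mul_left _ _ (mul_pos hs ht).ne', corr]

lemma measurable_corr {α : Type*} [MeasurableSpace α] {f g : α → Fin T → ℝ}
    (hf : Measurable f) (hg : Measurable g) : Measurable fun p => corr (f p) (g p) := by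
  have hdot : Measurable fun p : (Fin T → ℝ) × (Fin T → ℝ) => p.1 ⬝ᵥ p.2 :=
    Continuous.measurable (by fun_prop)
  exact (hdot.comp (hf.prodMk hg)).div
    ((hdot.comp (hf.prodMk hf)).sqrt.mul (hdot.comp (hg.prodMk hg)).sqrt)

lemma exists_pos_smul_unit_eq {n : Type*} [Fintype n] {x : n → ℝ} (hx : x ≠ 0) :
    ∃ s > (0 : ℝ), ∃ u : n → ℝ, u ⬝ᵥ u = 1 ∧ s • u = x := by
  have hpos : 0 < x ⬝ᵥ x := by simpa using dotProduct_star_self_pos_iff.2 hx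
  refine ⟨√(x ⬝ᵥ x), Real.sqrt_pos.2 hpos, (√(x ⬝ᵥ x))⁻¹ • x, ?_, ?_⟩
  · rw [dotProduct_smul, smul_dotProduct, smul_smul, smul_eq_mul, ← mul_inv,
      Real.mul_self_sqrt hpos.le, inv_mul_cancel₀ hpos.ne']
  · exact smul_inv_smul₀ (Real.sqrt_pos.2 hpos).ne' x

lemma abs_corr_mulVec_lt {N : Matrix (Fin T) (Fin T) ℝ} (hsymm : N.IsSymm)
    (hidem : IsIdempotentElem N) {x y : Fin T → ℝ} {c η : ℝ} (hη : η ≤ 1 / 2)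
    (hxx : |x ⬝ᵥ N *ᵥ x - c| < η * c) (hyy : |y ⬝ᵥ N *ᵥ y - c| < η * c)
    (hxy : |x ⬝ᵥ N *ᵥ y - c * (x ⬝ᵥ y)| < η * c) (hdot : |x ⬝ᵥ y| < η) :
    |corr (N *ᵥ x) (N *ᵥ y)| < 4 * η := by
  have hη_pos : 0 < η := (abs_nonneg _).trans_lt hdot
  have hc : 0 < c := pos_of_mul_pos_right ((abs_nonneg _).trans_lt hxx) hη_pos.le
  have hηc : η * c ≤ c / 2 := by nlinarith
  have hnorm : c / 2 ≤ √(x ⬝ᵥ N *ᵥ x) * √(y ⬝ᵥ N *ᵥ y) := by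
    have hx : c / 2 ≤ x ⬝ᵥ N *ᵥ x := by linarith [(abs_lt.1 hxx).1]
    have hy : c / 2 ≤ y ⬝ᵥ N *ᵥ y := by linarith [(abs_lt.1 hyy).1]
    calc c / 2 = √(c / 2) * √(c / 2) := (Real.mul_self_sqrt (by positivity)).symm
      _ ≤ √(x ⬝ᵥ N *ᵥ x) * √(y ⬝ᵥ N *ᵥ y) := by gcongr
  have hinner : |x ⬝ᵥ N *ᵥ y| < 2 * η * c := by
    calc |x ⬝ᵥ N *ᵥ y|
        = |(x ⬝ᵥ N *ᵥ y - c * (x ⬝ᵥ y)) + c * (x ⬝ᵥ y)| := by rw [sub_add_cancel]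
      _ ≤ |x ⬝ᵥ N *ᵥ y - c * (x ⬝ᵥ y)| + c * |x ⬝ᵥ y| := by
          simpa only [abs_mul, abs_of_pos hc] using
            abs_add_le (x ⬝ᵥ N *ᵥ y - c * (x ⬝ᵥ y)) (c * (x ⬝ᵥ y))
      _ < η * c + c * η := by gcongr
      _ = 2 * η * c := by ring
  have hnorm_pos : 0 < √(x ⬝ᵥ N *ᵥ x) * √(y ⬝ᵥ N *ᵥ y) := by linarith
  simp only [corr, mulVec_dotProduct_mulVec_of_isSymm_of_isIdempotentElem hsymm hidem]
  rw [abs_div, abs_of_pos hnorm_pos, div_lt_iff₀ hnorm_pos]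
  nlinarith

end Corr

section ProjectionCorr

variable {T : ℕ} {ν : Measure (Matrix (Fin T) (Fin T) ℝ)} {G : Matrix (Fin T) (Fin T) ℝ} {η : ℝ}

lemma IsHaarOrth.measureReal_abs_corr_conj_mulVec_ge_le_of_unit (hν : IsHaarOrth (Fin T) ν)
    (hsymm : G.IsSymm) (hidem : IsIdempotentElem G) (htrace : 0 < G.trace) (hη : η ≤ 1 / 2)
    {x y : Fin T → ℝ} (hx : x ⬝ᵥ x = 1) (hy : y ⬝ᵥ y = 1) (hxy : |x ⬝ᵥ y| < η) :
    ν.real {O | 4 * η ≤ |corr ((O * G * Oᵀ) *ᵥ x) ((O * G * Oᵀ) *ᵥ y)|} ≤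
      12 / (G.trace * η ^ 2) := by
  have := hν.1
  have : Nonempty (Fin T) := not_isEmpty_iff.1 fun _ => by simp at hx
  have hη_pos : 0 < η := (abs_nonneg _).trans_lt hxy
  set c := G.trace / (Fintype.card (Fin T) : ℝ)
  set far : (Fin T → ℝ) → (Fin T → ℝ) → Set (Matrix (Fin T) (Fin T) ℝ) := fun u v =>
    {O | η * c ≤ |rotatedForm G O u v - c * (u ⬝ᵥ v)|} with hfar
  have hsubset : {O | 4 * η ≤ |corr ((O * G * Oᵀ) *ᵥ x) ((O * G * Oᵀ) *ᵥ y)|} ≤ᵐ[ν]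
      (far x x ∪ far y y ∪ far x y : Set _) := by
    filter_upwards [hν.2.1] with O hO hlarge
    by_contra hclose
    replace hclose : O ∉ far x x ∪ far y y ∪ far x y := hclose
    simp only [hfar, Set.mem_union, Set.mem_ofPred_eq, not_or, not_le, hx, hy, mul_one] at hclose
    have hidem_conj : IsIdempotentElem (O * G * Oᵀ) := by
      rw [IsIdempotentElem, conj_mul_conj hO, hidem.eq]
    exact (abs_corr_mulVec_lt (isSymm_conj hsymm O) hidem_conj hη hclose.1.1 hclose.1.2 hclose.2
      hxy).not_ge hlarge
  have hfar_le {u v : Fin T → ℝ} (hu : u ⬝ᵥ u = 1) (hv : v ⬝ᵥ v = 1) :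
      ν.real (far u v) ≤ 4 / (G.trace * η ^ 2) :=
    hν.measureReal_abs_rotatedForm_sub_ge_le hsymm hidem htrace hu hv hη_pos
  calc ν.real {O | 4 * η ≤ |corr ((O * G * Oᵀ) *ᵥ x) ((O * G * Oᵀ) *ᵥ y)|}
      ≤ ν.real (far x x ∪ far y y ∪ far x y) :=
        ENNReal.toReal_mono (measure_ne_top _ _) (measure_mono_ae hsubset)
    _ ≤ ν.real (far x x) + ν.real (far y y) + ν.real (far x y) :=
        (measureReal_union_le _ _).trans (by gcongr; exact measureReal_union_le _ _)
    _ ≤ 4 / (G.trace * η ^ 2) + 4 / (G.trace * η ^ 2) + 4 / (G.trace * η ^ 2) := by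
        gcongr
        exacts [hfar_le hx hx, hfar_le hy hy, hfar_le hx hy]
    _ = 12 / (G.trace * η ^ 2) := by ring

lemma IsHaarOrth.measureReal_abs_corr_conj_mulVec_ge_le (hν : IsHaarOrth (Fin T) ν)
    (hsymm : G.IsSymm) (hidem : IsIdempotentElem G) (htrace : 0 < G.trace) (hη : η ≤ 1 / 2)
    {x y : Fin T → ℝ} (hxy : |corr x y| < η) :
    ν.real {O | 4 * η ≤ |corr ((O * G * Oᵀ) *ᵥ x) ((O * G * Oᵀ) *ᵥ y)|} ≤
      12 / (G.trace * η ^ 2) := by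
  have hη_pos : 0 < η := (abs_nonneg _).trans_lt hxy
  have hη_not : ¬4 * η ≤ 0 := by linarith
  have hbound : 0 ≤ 12 / (G.trace * η ^ 2) := by positivity
  rcases eq_or_ne x 0 with rfl | hx
  · simpa [corr_zero_left, hη_not] using hbound
  rcases eq_or_ne y 0 with rfl | hy
  · simpa [corr_zero_right, hη_not] using hbound
  obtain ⟨s, hs, u, hu, rfl⟩ := exists_pos_smul_unit_eq hx
  obtain ⟨t, ht, v, hv, rfl⟩ := exists_pos_smul_unit_eq hy
  rw [corr_smul_smul hs ht, corr_of_unit hu hv] at hxy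
  simpa only [mulVec_smul, corr_smul_smul hs ht] using
    hν.measureReal_abs_corr_conj_mulVec_ge_le_of_unit hsymm hidem htrace hη hu hv hxy

end ProjectionCorr

section ColSpanProj

variable {T m : ℕ} {W : Matrix (Fin T) (Fin m) ℝ}

lemma isSymm_colSpanProj (W : Matrix (Fin T) (Fin m) ℝ) : (colSpanProj W).IsSymm := by
  simp only [Matrix.IsSymm, colSpanProj, transpose_mul, transpose_transpose,
    transpose_nonsing_inv, Matrix.mul_assoc]

lemma isIdempotentElem_colSpanProj (hW : W.rank = m) : IsIdempotentElem (colSpanProj W) := by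
  have hgram : IsUnit (Wᵀ * W).det :=
    isUnit_det_transpose_mul_self_of_rank_eq (by rwa [Fintype.card_fin])
  calc colSpanProj W * colSpanProj W
      = W * (Wᵀ * W)⁻¹ * ((Wᵀ * W) * (Wᵀ * W)⁻¹) * Wᵀ := by
        simp only [colSpanProj, Matrix.mul_assoc]
    _ = colSpanProj W := by
        rw [mul_nonsing_inv _ hgram, Matrix.mul_one, colSpanProj]

lemma trace_colSpanProj (hW : W.rank = m) : (colSpanProj W).trace = m := by
  have hgram : IsUnit (Wᵀ * W).det :=
    isUnit_det_transpose_mul_self_of_rank_eq (by rwa [Fintype.card_fin])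
  rw [colSpanProj, trace_mul_comm, ← Matrix.mul_assoc,
    mul_nonsing_inv _ hgram, trace_one, Fintype.card_fin]

lemma colSpanProj_orthogonal_mul (W : Matrix (Fin T) (Fin m) ℝ) {O : Matrix (Fin T) (Fin T) ℝ}
    (hO : Oᵀ * O = 1) : colSpanProj (O * W) = O * colSpanProj W * Oᵀ := by
  have hgram : (O * W)ᵀ * (O * W) = Wᵀ * W := by
    rw [transpose_mul, Matrix.mul_assoc, ← Matrix.mul_assoc Oᵀ, hO, Matrix.one_mul]
  rw [colSpanProj, hgram, transpose_mul, colSpanProj]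
  simp only [Matrix.mul_assoc]

end ColSpanProj

lemma measure_prodMk_mem_le_of_indepFun {Ω α β : Type*} [MeasurableSpace Ω] [MeasurableSpace α]
    [MeasurableSpace β] {P : Measure Ω} [IsProbabilityMeasure P] {X : Ω → α} {Y : Ω → β}
    (hX : AEMeasurable X P) (hY : AEMeasurable Y P) (hindep : IndepFun X Y P)
    {A : Set (α × β)} (hA : MeasurableSet A) {B : Set β} (hB : MeasurableSet B) {K : ENNReal}
    (hK : ∀ y ∉ B, P.map X ((fun x => (x, y)) ⁻¹' A) ≤ K) :
    P {ω | (X ω, Y ω) ∈ A} ≤ P {ω | Y ω ∈ B} + K := by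
  have := Measure.isProbabilityMeasure_map hX
  have := Measure.isProbabilityMeasure_map hY
  have section_le (y : β) : P.map X ((fun x => (x, y)) ⁻¹' A) ≤ B.indicator 1 y + K := by
    by_cases hy : y ∈ B
    · simpa [hy] using prob_le_one.trans le_self_add
    · simpa [hy] using hK y hy
  calc P {ω | (X ω, Y ω) ∈ A}
      = ((P.map X).prod (P.map Y)) A := by
        rw [← hindep.map_prod_eq_prod_map_map hX hY,
          Measure.map_apply_of_aemeasurable (hX.prodMk hY) hA]
        rfl
    _ = ∫⁻ y, P.map X ((fun x => (x, y)) ⁻¹' A) ∂P.map Y := Measure.prod_apply_symm hA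
    _ ≤ ∫⁻ y, (B.indicator 1 y + K) ∂P.map Y := lintegral_mono section_le
    _ = P.map Y B + K := by
        rw [lintegral_add_right _ measurable_const, lintegral_indicator_one hB, lintegral_const,
          measure_univ, mul_one]
    _ = P {ω | Y ω ∈ B} + K := by
        rw [Measure.map_apply_of_aemeasurable hY hB]
        rfl

theorem measure_abs_corr_colSpanProj_ge_le {T m : ℕ} {Ω : Type*} [MeasurableSpace Ω]
    {P : Measure Ω} [IsProbabilityMeasure P] {a b : Ω → Fin T → ℝ}
    {Q : Ω → Matrix (Fin T) (Fin T) ℝ} (hab : AEMeasurable (fun ω => (a ω, b ω)) P)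
    (hHaar : IsHaarOrth (Fin T) (P.map Q)) (hindep : IndepFun Q (fun ω => (a ω, b ω)) P)
    {W : Matrix (Fin T) (Fin m) ℝ} (hrank : W.rank = m) (hm : 0 < m)
    {η : ℝ} (hη : η ≤ 1 / 2) :
    P {ω | 4 * η ≤ |corr (colSpanProj (Q ω * W) *ᵥ a ω) (colSpanProj (Q ω * W) *ᵥ b ω)|} ≤
      P {ω | η ≤ |corr (a ω) (b ω)|} + ENNReal.ofReal (12 / (m * η ^ 2)) := by
  have := hHaar.1
  -- `Measure.map` along a function that is not a.e. measurable is the zero measure.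
  have hQ : AEMeasurable Q P := aemeasurable_of_map_neZero inferInstance
  set G := colSpanProj W
  have htrace : G.trace = m := trace_colSpanProj hrank
  have htrace_pos : 0 < G.trace := htrace ▸ Nat.cast_pos.2 hm
  set A : Set (Matrix (Fin T) (Fin T) ℝ × (Fin T → ℝ) × (Fin T → ℝ)) :=
    {p | 4 * η ≤ |corr ((p.1 * G * p.1ᵀ) *ᵥ p.2.1) ((p.1 * G * p.1ᵀ) *ᵥ p.2.2)|}
  set B : Set ((Fin T → ℝ) × (Fin T → ℝ)) := {p | η ≤ |corr p.1 p.2|}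
  have hA : MeasurableSet A := by
    refine measurableSet_le measurable_const (measurable_corr ?_ ?_).abs <;>
      exact Continuous.measurable (by fun_prop)
  have hB : MeasurableSet B :=
    measurableSet_le measurable_const (measurable_corr measurable_fst measurable_snd).abs
  have hprojection : ∀ᵐ ω ∂P, colSpanProj (Q ω * W) = Q ω * G * (Q ω)ᵀ :=
    (ae_of_ae_map hQ hHaar.2.1).mono fun ω hω => colSpanProj_orthogonal_mul W hω
  calc P {ω | 4 * η ≤ |corr (colSpanProj (Q ω * W) *ᵥ a ω) (colSpanProj (Q ω * W) *ᵥ b ω)|}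
      ≤ P {ω | (Q ω, a ω, b ω) ∈ A} := by
        refine measure_mono_ae ?_
        filter_upwards [hprojection] with ω hω hlarge
        change 4 * η ≤ |corr ((Q ω * G * (Q ω)ᵀ) *ᵥ a ω) ((Q ω * G * (Q ω)ᵀ) *ᵥ b ω)|
        rw [← hω]
        exact hlarge
    _ ≤ P {ω | (a ω, b ω) ∈ B} + ENNReal.ofReal (12 / (m * η ^ 2)) := by
        refine measure_prodMk_mem_le_of_indepFun hQ hab hindep hA hB fun p hp => ?_
        have hcorr : |corr p.1 p.2| < η := not_le.1 hp
        have hconditional := hHaar.measureReal_abs_corr_conj_mulVec_ge_le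
          (isSymm_colSpanProj W) (isIdempotentElem_colSpanProj hrank) htrace_pos hη hcorr
        rw [← ofReal_measureReal, ← htrace]
        exact ENNReal.ofReal_le_ofReal hconditional

theorem projection_preserves_orthogonality_general {ι : Type*} {l : Filter ι} {N M : ι → ℕ}
    (hM : Tendsto M l atTop) {Ω : ι → Type*} [∀ i, MeasurableSpace (Ω i)]
    {P : ∀ i, Measure (Ω i)} [∀ i, IsProbabilityMeasure (P i)] {a b : ∀ i, Ω i → Fin (N i) → ℝ}
    {Q : ∀ i, Ω i → Matrix (Fin (N i)) (Fin (N i)) ℝ}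
    (hab : ∀ i, AEMeasurable (fun ω => (a i ω, b i ω)) (P i))
    (hHaar : ∀ i, IsHaarOrth (Fin (N i)) ((P i).map (Q i)))
    (hindep : ∀ i, IndepFun (Q i) (fun ω => (a i ω, b i ω)) (P i))
    {W : ∀ i, Matrix (Fin (N i)) (Fin (M i)) ℝ} (hrank : ∀ i, (W i).rank = M i)
    (hangle : ∀ ε > (0 : ℝ),
      Tendsto (fun i => P i {ω | ε ≤ |corr (a i ω) (b i ω)|}) l (nhds 0))
    {ε : ℝ} (hε : 0 < ε) :
    Tendsto (fun i => P i {ω | ε ≤ |corr (colSpanProj (Q i ω * W i) *ᵥ a i ω)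
      (colSpanProj (Q i ω * W i) *ᵥ b i ω)|}) l (nhds 0) := by
  set η := min (1 / 2) (ε / 4)
  have hη : 0 < η := by positivity
  have hηε : 4 * η ≤ ε := by linarith [min_le_right (1 / 2) (ε / 4)]
  have hbound : Tendsto (fun i => P i {ω | η ≤ |corr (a i ω) (b i ω)|} +
      ENNReal.ofReal (12 / (M i * η ^ 2))) l (nhds 0) := by
    have hreal : Tendsto (fun i => 12 / (M i * η ^ 2)) l (nhds 0) :=
      ((tendsto_natCast_atTop_atTop.comp hM).atTop_mul_const (by positivity)).const_div_atTop 12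
    simpa using (hangle η hη).add (ENNReal.tendsto_ofReal hreal)
  refine tendsto_of_tendsto_of_tendsto_of_le_of_le' tendsto_const_nhds hbound
    (.of_forall fun _ => zero_le) ?_
  filter_upwards [hM.eventually_gt_atTop 0] with i hi
  exact (measure_mono fun ω => hηε.trans).trans
    (measure_abs_corr_colSpanProj_ge_le (hab i) (hHaar i) (hindep i) (hrank i) hi
      (min_le_left _ _))

lemma tendsto_atTop_of_tendsto_div {M : ℕ → ℕ} {α : ℝ} (hα : 0 < α)
    (hM : Tendsto (fun T : ℕ => (M T : ℝ) / T) atTop (nhds α)) : Tendsto M atTop atTop := by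
  refine tendsto_natCast_atTop_iff.1 ((hM.pos_mul_atTop hα tendsto_natCast_atTop_atTop).congr' ?_)
  filter_upwards [eventually_ne_atTop 0] with T hT
  exact div_mul_cancel₀ _ (Nat.cast_ne_zero.2 hT)

/-- For each `T`, let `a_T, b_T` be random vectors in `ℝ^T` and let `𝒱_T = Q_T W_T` be a
uniformly random `M(T)`-dimensional subspace (the image of a fixed `M(T)`-dimensional subspace,
spanned by the columns of a full-column-rank matrix `W_T`, under a Haar orthogonal `Q_T`)
independent of `(a_T, b_T)`. If `M(T)/T → α ∈ (0,1)` and the correlation of `a_T` and `b_T`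
tends to `0` in probability (the angle tends to `π/2`), then the correlation of the orthogonal
projections of `a_T` and `b_T` onto `𝒱_T` also tends to `0` in probability. -/
theorem projection_preserves_orthogonality
    (α : ℝ) (hα0 : 0 < α) (hα1 : α < 1)
    (M : ℕ → ℕ) (hM : Tendsto (fun T : ℕ => (M T : ℝ) / T) atTop (nhds α))
    (Ω : ℕ → Type*) (mΩ : ∀ T, MeasurableSpace (Ω T))
    (P : ∀ T, Measure (Ω T)) (hP : ∀ T, IsProbabilityMeasure (P T))
    (a b : ∀ T, Ω T → Fin T → ℝ)
    (Q : ∀ T, Ω T → Matrix (Fin T) (Fin T) ℝ)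
    (hQmeas : ∀ T, Measurable (Q T))
    (habmeas : ∀ T, Measurable (fun ω => (a T ω, b T ω)))
    (hHaar : ∀ T, IsHaarOrth (Fin T) ((P T).map (Q T)))
    (hindep : ∀ T, IndepFun (Q T) (fun ω => (a T ω, b T ω)) (P T))
    (W : ∀ T, Matrix (Fin T) (Fin (M T)) ℝ)
    (hrank : ∀ T, (W T).rank = M T)
    (hangle : ∀ ε > (0 : ℝ),
      Tendsto (fun T : ℕ => P T {ω | ε ≤ |corr (a T ω) (b T ω)|}) atTop (nhds 0)) :
    ∀ ε > (0 : ℝ),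
      Tendsto (fun T : ℕ => P T {ω | ε ≤
          |corr ((colSpanProj (Q T ω * W T)).mulVec (a T ω))
                ((colSpanProj (Q T ω * W T)).mulVec (b T ω))|})
        atTop (nhds 0) := by
  intro ε hε
  exact projection_preserves_orthogonality_general (tendsto_atTop_of_tendsto_div hα0 hM)
    (fun T => (habmeas T).aemeasurable) hHaar hindep hrank hangle hε

end
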